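/- arXiv:math/0205241 — 3 statements merged into one kernel-verified Lean document; each statement's English description precedes it below -/
import Mathlib

section
/- Let φ be subharmonic with doubling Laplacian, ρ the associated radius function and d_φ the induced distance. If Λ ⊂ ℂ is a ρ-separated sequence, then there exists m ∈ ℕ such that sup_{z∈ℂ} Σ_{λ∈Λ} 1/(1 + d_φ(z,λ)^m) < ∞. Moreover, lim_{r→∞} sup_{z∈ℂ} Σ_{λ∈Λ, d_φ(z,λ)≥r} d_φ(z,λ)^{-m} = 0. -/
open MeasureTheory Metric Filter Set
open scoped ENNReal NNReal Real Topology Classical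

noncomputable section

/-- The Laplacian of a function on `ℂ ≅ ℝ²`, computed via the second Fréchet derivative. -/
def lap (v : ℂ → ℝ) (z : ℂ) : ℝ :=
  iteratedFDeriv ℝ 2 v z ![1, 1] + iteratedFDeriv ℝ 2 v z ![Complex.I, Complex.I]

/-- `μ` is a doubling measure on `ℂ` with doubling constant `C`. -/
def IsDoubling (μ : Measure ℂ) (C : ℝ≥0) : Prop :=
  ∀ z : ℂ, ∀ r : ℝ, 0 < r → μ (ball z (2 * r)) ≤ C * μ (ball z r)

/-- `φ` is a (continuous) subharmonic function whose distributional Laplacian is the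
doubling measure `μ` (not identically zero).  The distributional identity is expressed
by testing against smooth compactly supported functions. -/
structure HasDoublingLaplacian (φ : ℂ → ℝ) (μ : Measure ℂ) : Prop where
  continuous : Continuous φ
  lap_eq : ∀ v : ℂ → ℝ, ContDiff ℝ (⊤ : ℕ∞) v → HasCompactSupport v →
    ∫ z, φ z * lap v z = ∫ z, v z ∂μ
  doubling : ∃ C : ℝ≥0, 0 < C ∧ IsDoubling μ C
  ne_zero : μ ≠ 0

/-- `ρ` assigns to every `z` the positive radius such that the disk `D(z, ρ z)` has
`μ`-mass `1`. -/
def IsRadius (μ : Measure ℂ) (ρ : ℂ → ℝ) : Prop :=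
  ∀ z : ℂ, 0 < ρ z ∧ μ (ball z (ρ z)) = 1

/-- The distance induced by the metric `ρ(z)⁻² dz⊗d\bar z`: infimum of lengths of
`C¹` curves joining the two points. -/
def pathDist (ρ : ℂ → ℝ) (z ζ : ℂ) : ℝ :=
  sInf { L : ℝ | ∃ γ : ℝ → ℂ, γ 0 = z ∧ γ 1 = ζ ∧ ContDiff ℝ 1 γ ∧
    L = ∫ t in (0:ℝ)..1, ‖deriv γ t‖ / ρ (γ t) }

/-- The `pathDist` from a point to a set. -/
def pathDistSet (ρ : ℂ → ℝ) (z : ℂ) (Λ : Set ℂ) : ℝ :=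
  ⨅ l : Λ, pathDist ρ z l.1

/-- A flat weight for `φ`: a positive measurable function whose logarithm has slow
growth with respect to the induced distance. -/
def IsFlatWeight (ρ : ℂ → ℝ) (ω : ℂ → ℝ) : Prop :=
  (∀ z, 0 < ω z) ∧ Measurable ω ∧
  ∃ C : ℝ, 0 < C ∧ ∀ z ζ : ℂ,
    |Real.log (ω z) - Real.log (ω ζ)| ≤ C * (1 + max (Real.log (pathDist ρ z ζ)) 0)

/-- The norm of the space `F^p_{φ,ω}` (with `p = ∞` giving the weighted sup norm). -/
def Fnorm (p : ℝ≥0∞) (φ ω ρ : ℂ → ℝ) (f : ℂ → ℂ) : ℝ≥0∞ :=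
  if p = ∞ then ⨆ z : ℂ, ENNReal.ofReal (ω z * ‖f z‖ * Real.exp (-φ z))
  else (∫⁻ z, ENNReal.ofReal
      (‖f z‖ ^ p.toReal * Real.exp (-(p.toReal * φ z)) * ω z ^ p.toReal / ρ z ^ 2)) ^
      (1 / p.toReal)

/-- Membership in `F^p_{φ,ω}`: entire with finite norm. -/
def MemF (p : ℝ≥0∞) (φ ω ρ : ℂ → ℝ) (f : ℂ → ℂ) : Prop :=
  Differentiable ℂ f ∧ Fnorm p φ ω ρ f < ∞

/-- The norm of the sequence space `ℓ^p_{φ,ω}(Λ)`. -/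
def lnorm (p : ℝ≥0∞) (φ ω : ℂ → ℝ) (Λ : Set ℂ) (v : ℂ → ℂ) : ℝ≥0∞ :=
  if p = ∞ then ⨆ l : Λ, ENNReal.ofReal (ω l.1 * ‖v l.1‖ * Real.exp (-φ l.1))
  else (∑' l : Λ, ENNReal.ofReal
      (ω l.1 ^ p.toReal * ‖v l.1‖ ^ p.toReal * Real.exp (-(p.toReal * φ l.1)))) ^
      (1 / p.toReal)

/-- `Λ` is a sampling sequence for `F^p_{φ,ω}`. -/
def IsSampling (p : ℝ≥0∞) (φ ω ρ : ℂ → ℝ) (Λ : Set ℂ) : Prop :=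
  if p = ∞ then
    ∃ C : ℝ≥0, 0 < C ∧ ∀ f : ℂ → ℂ, MemF ∞ φ ω ρ f →
      Fnorm ∞ φ ω ρ f ≤ C * lnorm ∞ φ ω Λ f
  else
    ∃ C : ℝ≥0, 0 < C ∧ ∀ f : ℂ → ℂ, MemF p φ ω ρ f →
      (C : ℝ≥0∞)⁻¹ * lnorm p φ ω Λ f ≤ Fnorm p φ ω ρ f ∧
      Fnorm p φ ω ρ f ≤ C * lnorm p φ ω Λ f

/-- `Λ` is an interpolating sequence for `F^p_{φ,ω}`. -/
def IsInterpolating (p : ℝ≥0∞) (φ ω ρ : ℂ → ℝ) (Λ : Set ℂ) : Prop :=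
  ∀ v : ℂ → ℂ, lnorm p φ ω Λ v < ∞ →
    ∃ f : ℂ → ℂ, MemF p φ ω ρ f ∧ ∀ l ∈ Λ, f l = v l

/-- `Λ` is `ρ`-separated. -/
def RhoSeparated (ρ : ℂ → ℝ) (Λ : Set ℂ) : Prop :=
  ∃ δ : ℝ, 0 < δ ∧ ∀ l ∈ Λ, ∀ l' ∈ Λ, l ≠ l' → δ * max (ρ l) (ρ l') ≤ dist l l'

/-- `Λ` is a finite union of `ρ`-separated sequences. -/
def FiniteUnionSeparated (ρ : ℂ → ℝ) (Λ : Set ℂ) : Prop :=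
  ∃ n : ℕ, ∃ Λs : Fin n → Set ℂ, Λ = ⋃ i, Λs i ∧ ∀ i, RhoSeparated ρ (Λs i)

/-- Upper uniform density of `Λ` with respect to the doubling measure `μ`. -/
def upperUnifDensity (μ : Measure ℂ) (ρ : ℂ → ℝ) (Λ : Set ℂ) : ℝ≥0∞ :=
  limsup (fun r : ℝ =>
    ⨆ z : ℂ, Measure.count (Λ ∩ closedBall z (r * ρ z)) / μ (ball z (r * ρ z))) atTop

/-- Lower uniform density of `Λ` with respect to the doubling measure `μ`. -/
def lowerUnifDensity (μ : Measure ℂ) (ρ : ℂ → ℝ) (Λ : Set ℂ) : ℝ≥0∞ :=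
  liminf (fun r : ℝ =>
    ⨅ z : ℂ, Measure.count (Λ ∩ closedBall z (r * ρ z)) / μ (ball z (r * ρ z))) atTop

/-- The Cauchy–Riemann operator `∂̄` on `ℂ`-valued functions. -/
def dbar (v : ℂ → ℂ) (z : ℂ) : ℂ :=
  (fderiv ℝ v z 1 + Complex.I • fderiv ℝ v z Complex.I) / 2

/-- `∂̄ u = f` in the sense of distributions. -/
def IsDistribDbarOf (u f : ℂ → ℂ) : Prop :=
  ∀ v : ℂ → ℂ, ContDiff ℝ (⊤ : ℕ∞) v → HasCompactSupport v →
    ∫ z, f z * v z = - ∫ z, u z * dbar v z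

/-- Closed axis-parallel rectangle with centre `a` and half-sides `s, t`. -/
def axisRect (a : ℂ) (s t : ℝ) : Set ℂ :=
  {w : ℂ | |w.re - a.re| ≤ s ∧ |w.im - a.im| ≤ t}


lemma dbl_iter {μ : Measure ℂ} {C : ℝ≥0} (h : IsDoubling μ C) (z : ℂ) (n : ℕ) :
    ∀ r : ℝ, 0 < r → μ (ball z (2 ^ n * r)) ≤ (C : ℝ≥0∞) ^ n * μ (ball z r) := by
  induction n with
  | zero => intro r _; simp
  | succ n ih =>
    intro r hr
    calc μ (ball z (2 ^ (n+1) * r)) = μ (ball z (2 ^ n * (2 * r))) := by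
          congr 2; ring
      _ ≤ (C : ℝ≥0∞) ^ n * μ (ball z (2 * r)) := ih _ (by positivity)
      _ ≤ (C : ℝ≥0∞) ^ n * (C * μ (ball z r)) := by gcongr; exact h z r hr
      _ = _ := by ring

lemma ball_pos' {μ : Measure ℂ} {C : ℝ≥0} (h : IsDoubling μ C) {ρ : ℂ → ℝ}
    (hρ : IsRadius μ ρ) (z : ℂ) (r : ℝ) (hr : 0 < r) : 0 < μ (ball z r) := by
  obtain ⟨k, hk⟩ := pow_unbounded_of_one_lt (ρ z / r) (one_lt_two : (1:ℝ) < 2)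
  rw [div_lt_iff₀ hr] at hk
  have h1 : 1 ≤ (C : ℝ≥0∞) ^ k * μ (ball z r) := by
    rw [← (hρ z).2]
    exact (measure_mono (ball_subset_ball hk.le)).trans (dbl_iter h z k r hr)
  rcases eq_or_ne (μ (ball z r)) 0 with h0 | h0
  · rw [h0] at h1; simp at h1
  · exact pos_iff_ne_zero.mpr h0

lemma rho_le {μ : Measure ℂ} {C : ℝ≥0} (h : IsDoubling μ C) {ρ : ℂ → ℝ}
    (hρ : IsRadius μ ρ) (w : ℂ) (X : ℝ) (hX : 0 < X) (h1 : 1 ≤ μ (ball w X)) : ρ w ≤ X := by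
  by_contra! hlt
  set c : ℂ := w + (((X + ρ w) / 2 : ℝ) : ℂ) with hc
  have hd : dist c w = (X + ρ w) / 2 := by
    rw [hc, dist_eq_norm, add_sub_cancel_left, Complex.norm_real, Real.norm_eq_abs,
      abs_of_pos (by linarith)]
  have hdisj : Disjoint (ball w X) (ball c ((ρ w - X) / 2)) := by
    apply ball_disjoint_ball
    rw [dist_comm, hd]; linarith
  have hsub : ball w X ∪ ball c ((ρ w - X) / 2) ⊆ ball w (ρ w) := by
    apply union_subset (ball_subset_ball hlt.le)
    apply ball_subset_ball'
    rw [hd]; linarith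
  have hp := ball_pos' h hρ c ((ρ w - X) / 2) (by linarith)
  have := measure_mono (μ := μ) hsub
  rw [measure_union hdisj measurableSet_ball, (hρ w).2] at this
  have h2 : (1 : ℝ≥0∞) + μ (ball c ((ρ w - X) / 2)) ≤ 1 := le_trans (by gcongr) this
  have h3 : (1 : ℝ≥0∞) < 1 + μ (ball c ((ρ w - X) / 2)) :=
    ENNReal.lt_add_right ENNReal.one_ne_top hp.ne'
  exact absurd h2 (not_le.mpr h3)

lemma rho_lip {μ : Measure ℂ} {C : ℝ≥0} (h : IsDoubling μ C) {ρ : ℂ → ℝ}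
    (hρ : IsRadius μ ρ) (w z : ℂ) : ρ w ≤ ρ z + dist w z := by
  have hz := hρ z
  apply rho_le h hρ w _ (by have := dist_nonneg (x := w) (y := z); linarith [hz.1])
  rw [← hz.2]
  apply measure_mono
  apply ball_subset_ball'
  rw [dist_comm]

lemma rho_cont {μ : Measure ℂ} {C : ℝ≥0} (h : IsDoubling μ C) {ρ : ℂ → ℝ}
    (hρ : IsRadius μ ρ) : Continuous ρ := by
  have : LipschitzWith 1 ρ := LipschitzWith.of_le_add fun x y => rho_lip h hρ x y
  exact this.continuous

lemma rev_dbl {μ : Measure ℂ} {C : ℝ≥0} (hC : 1 ≤ C) (h : IsDoubling μ C) (z : ℂ) (r : ℝ)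
    (hr : 0 < r) : ((1 + (C ^ 2)⁻¹ : ℝ≥0) : ℝ≥0∞) * μ (ball z r) ≤ μ (ball z (4 * r)) := by
  set c : ℂ := z + ((2 * r : ℝ) : ℂ) with hc
  have hd : dist c z = 2 * r := by
    rw [hc, dist_eq_norm, add_sub_cancel_left, Complex.norm_real, Real.norm_eq_abs,
      abs_of_pos (by linarith)]
  have hdisj : Disjoint (ball z r) (ball c r) := by
    apply ball_disjoint_ball
    rw [dist_comm, hd]; linarith
  have hsub : ball z r ∪ ball c r ⊆ ball z (4 * r) := by
    apply union_subset (ball_subset_ball (by linarith))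
    apply ball_subset_ball'
    rw [hd]; linarith
  have h1 : μ (ball z r) ≤ (C : ℝ≥0∞) ^ 2 * μ (ball c r) := by
    refine le_trans (measure_mono ?_) (dbl_iter h c 2 r hr)
    apply ball_subset_ball'
    rw [dist_comm, hd]; linarith
  have hC0 : C ^ 2 ≠ 0 := by positivity
  have h2 : (((C ^ 2)⁻¹ : ℝ≥0) : ℝ≥0∞) * μ (ball z r) ≤ μ (ball c r) := by
    calc (((C ^ 2)⁻¹ : ℝ≥0) : ℝ≥0∞) * μ (ball z r)
        ≤ (((C ^ 2)⁻¹ : ℝ≥0) : ℝ≥0∞) * ((C : ℝ≥0∞) ^ 2 * μ (ball c r)) := by gcongr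
      _ = ((((C ^ 2)⁻¹ * C ^ 2 : ℝ≥0)) : ℝ≥0∞) * μ (ball c r) := by push_cast; ring
      _ = μ (ball c r) := by rw [inv_mul_cancel₀ hC0]; simp
  calc _ = μ (ball z r) + (((C ^ 2)⁻¹ : ℝ≥0) : ℝ≥0∞) * μ (ball z r) := by push_cast; ring
    _ ≤ μ (ball z r) + μ (ball c r) := by gcongr
    _ = μ (ball z r ∪ ball c r) := (measure_union hdisj measurableSet_ball).symm
    _ ≤ _ := measure_mono hsub

lemma rev_dbl_iter {μ : Measure ℂ} {C : ℝ≥0} (hC : 1 ≤ C) (h : IsDoubling μ C) (z : ℂ) (n : ℕ) :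
    ∀ r : ℝ, 0 < r →
      ((1 + (C ^ 2)⁻¹ : ℝ≥0) : ℝ≥0∞) ^ n * μ (ball z r) ≤ μ (ball z (4 ^ n * r)) := by
  induction n with
  | zero => intro r _; simp
  | succ n ih =>
    intro r hr
    calc ((1 + (C ^ 2)⁻¹ : ℝ≥0) : ℝ≥0∞) ^ (n + 1) * μ (ball z r)
        = ((1 + (C ^ 2)⁻¹ : ℝ≥0) : ℝ≥0∞) ^ n *
          (((1 + (C ^ 2)⁻¹ : ℝ≥0) : ℝ≥0∞) * μ (ball z r)) := by ring
      _ ≤ ((1 + (C ^ 2)⁻¹ : ℝ≥0) : ℝ≥0∞) ^ n * μ (ball z (4 * r)) := by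
          gcongr; exact rev_dbl hC h z r hr
      _ ≤ μ (ball z (4 ^ n * (4 * r))) := ih _ (by positivity)
      _ = _ := by congr 2; ring

/-- If `N` is large, all `w` near `z` have comparatively small `ρ w`. -/
lemma exists_growth {μ : Measure ℂ} {C : ℝ≥0} (hC : 1 ≤ C) (h : IsDoubling μ C) {ρ : ℂ → ℝ}
    (hρ : IsRadius μ ρ) : ∃ a : ℕ, ∀ (z : ℂ) (n : ℕ) (w : ℂ),
      dist w z ≤ 2 ^ (a * n) * ρ z → ρ w ≤ 2 * (2 ^ (a * n) * ρ z) / 2 ^ n := by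
  have hC0 : 0 < C := lt_of_lt_of_le one_pos hC
  obtain ⟨N, hN⟩ := pow_unbounded_of_one_lt C
    (lt_add_of_pos_right 1 (by positivity) : (1 : ℝ≥0) < 1 + (C ^ 2)⁻¹)
  refine ⟨2 * N, fun z n w hw => ?_⟩
  set S : ℝ := 2 ^ (2 * N * n) * ρ z with hS
  have hSpos : 0 < S := by have := (hρ z).1; positivity
  have h1 : (C : ℝ≥0∞) ^ n ≤ μ (ball z S) := by
    have := rev_dbl_iter hC h z (N * n) (ρ z) (hρ z).1
    rw [(hρ z).2, mul_one, pow_mul] at this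
    have e : (4 : ℝ) ^ (N * n) * ρ z = S := by
      rw [hS, mul_assoc, pow_mul _ 2 (N * n)]; norm_num
    rw [e] at this
    refine le_trans ?_ this
    gcongr
    exact_mod_cast hN.le
  have h2 : (C : ℝ≥0∞) ^ n ≤ (C : ℝ≥0∞) ^ n * μ (ball w (2 * S / 2 ^ n)) := by
    refine le_trans ?_ (dbl_iter h w n _ (by positivity))
    refine h1.trans (measure_mono (ball_subset_ball' ?_))
    rw [mul_div_cancel₀ _ (by positivity), dist_comm]; linarith
  apply rho_le h hρ w _ (by positivity)
  have hCn : (C : ℝ≥0∞) ^ n ≠ 0 := by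
    apply pow_ne_zero; exact_mod_cast hC0.ne'
  have hCt : (C : ℝ≥0∞) ^ n ≠ ∞ := ENNReal.pow_ne_top ENNReal.coe_ne_top
  by_contra! hlt
  have := (ENNReal.mul_lt_mul_iff_right hCn hCt).mpr hlt
  rw [mul_one] at this
  exact absurd h2 (not_le.mpr this)

lemma length_lower {ρ : ℂ → ℝ} (hc : Continuous ρ) (hpos : ∀ z, 0 < ρ z) (z ζ : ℂ) (S T : ℝ)
    (hS : 0 < S) (hT : 0 < T)
    (hb : ∀ w, dist w z ≤ S → ρ w ≤ T) (hζ : S ≤ dist ζ z) : S / T ≤ pathDist ρ z ζ := by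
  apply le_csInf
  · refine ⟨_, fun t : ℝ => z + (t : ℂ) * (ζ - z), by simp, by simp, ?_, rfl⟩
    exact contDiff_const.add (Complex.ofRealCLM.contDiff.mul contDiff_const)
  · rintro L ⟨γ, h0, h1, hγ, rfl⟩
    have hγc := hγ.continuous
    have hdc : Continuous (deriv γ) := hγ.continuous_deriv le_rfl
    have hf : Continuous fun t => dist (γ t) z := hγc.dist continuous_const
    obtain ⟨s, ⟨hs, hsS⟩, hmin⟩ : ∃ s, IsLeast (Icc (0:ℝ) 1 ∩ {t | S ≤ dist (γ t) z}) s := by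
      apply IsCompact.exists_isLeast
      · exact isCompact_Icc.inter_right (isClosed_le continuous_const hf)
      · exact ⟨1, by simp, by simpa [h1] using hζ⟩
    have hin : ∀ t ∈ Icc 0 s, ρ (γ t) ≤ T := by
      have hlt : ∀ t ∈ Ico 0 s, dist (γ t) z ≤ S := by
        intro t ht
        by_contra! hcon
        have := hmin ⟨⟨ht.1, ht.2.le.trans hs.2⟩, hcon.le⟩
        exact absurd ht.2 (not_lt.mpr this)
      have hs0 : s ≠ 0 := by
        rintro rfl
        simp [h0] at hsS
        linarith
      have hcl : Icc 0 s ⊆ {t | dist (γ t) z ≤ S} := by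
        rw [← closure_Ico hs0.symm]
        exact closure_minimal hlt (isClosed_le hf continuous_const)
      exact fun t ht => hb _ (hcl ht)
    have hgc : Continuous fun t => ‖deriv γ t‖ / ρ (γ t) :=
      hdc.norm.div (hc.comp hγc) fun t => (hpos _).ne'
    have hA : S ≤ ∫ t in (0:ℝ)..s, ‖deriv γ t‖ := by
      have : ∫ t in (0:ℝ)..s, deriv γ t = γ s - γ 0 :=
        intervalIntegral.integral_deriv_eq_sub
          (fun x _ => (hγ.differentiable one_ne_zero).differentiableAt)
          (hdc.intervalIntegrable _ _)
      calc S ≤ ‖γ s - γ 0‖ := by rw [h0, ← dist_eq_norm]; exact hsS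
        _ = ‖∫ t in (0:ℝ)..s, deriv γ t‖ := by rw [this]
        _ ≤ _ := intervalIntegral.norm_integral_le_integral_norm hs.1
    calc S / T ≤ (∫ t in (0:ℝ)..s, ‖deriv γ t‖) / T := by gcongr
      _ = ∫ t in (0:ℝ)..s, ‖deriv γ t‖ / T := by rw [intervalIntegral.integral_div]
      _ ≤ ∫ t in (0:ℝ)..s, ‖deriv γ t‖ / ρ (γ t) := by
          apply intervalIntegral.integral_mono_on hs.1
            ((hdc.norm.div_const _).intervalIntegrable _ _) (hgc.intervalIntegrable _ _)
          intro t ht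
          exact div_le_div_of_nonneg_left (norm_nonneg _) (hpos _) (hin t ht)
      _ ≤ ∫ t in (0:ℝ)..1, ‖deriv γ t‖ / ρ (γ t) := by
          apply intervalIntegral.integral_mono_interval le_rfl hs.1 hs.2 _
            (hgc.intervalIntegrable _ _)
          exact Filter.Eventually.of_forall fun t => div_nonneg (norm_nonneg _) (hpos _).le

/-- Points of a separated set in a large disk: polynomial count. -/
lemma count_bound {μ : Measure ℂ} {C : ℝ≥0} (h : IsDoubling μ C) {ρ : ℂ → ℝ}
    (hρ : IsRadius μ ρ) {Λ : Set ℂ} (hΛ : RhoSeparated ρ Λ) :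
    ∃ q : ℕ, ∀ (z : ℂ) (M : ℕ) (s : Set Λ), (∀ l ∈ s, dist l.1 z ≤ 2 ^ M * ρ z) →
      ∑' _ : s, (1 : ℝ≥0∞) ≤ (C : ℝ≥0∞) ^ q * (C : ℝ≥0∞) ^ M := by
  obtain ⟨δ, hδ, hsep⟩ := hΛ
  obtain ⟨p, hp⟩ := exists_pow_lt_of_lt_one (show 0 < min δ 1 / 2 by positivity)
    (show (1 / 2 : ℝ) < 1 by norm_num)
  refine ⟨p + 1, fun z M s hs => ?_⟩
  set e : ℝ := (1 / 2) ^ p with he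
  have hepos : 0 < e := by positivity
  have heδ : e * 2 ≤ δ := by have := min_le_left δ 1; linarith
  have he1 : e ≤ 1 / 2 := by have := min_le_right δ 1; linarith
  have he2 : 2 ^ p * e = 1 := by rw [he, ← mul_pow]; norm_num
  let B : s → Set ℂ := fun l => ball l.1.1 (e * ρ l.1.1)
  have hB : ∀ l : s, (1 : ℝ≥0∞) ≤ (C : ℝ≥0∞) ^ p * μ (B l) := by
    intro l
    have := dbl_iter h l.1.1 p (e * ρ l.1.1) (mul_pos hepos (hρ _).1)
    rwa [← mul_assoc, he2, one_mul, (hρ _).2] at this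
  have hdisj : Pairwise (Function.onFun Disjoint B) := by
    intro l l' hne
    apply ball_disjoint_ball
    have hne' : l.1.1 ≠ l'.1.1 := fun hh => hne (Subtype.ext (Subtype.ext hh))
    refine le_trans ?_ (hsep _ l.1.2 _ l'.1.2 hne')
    have a1 := le_max_left (ρ l.1.1) (ρ l'.1.1)
    have a2 := le_max_right (ρ l.1.1) (ρ l'.1.1)
    have a3 := (hρ l.1.1).1
    nlinarith
  have hsub : (⋃ l, B l) ⊆ ball z (2 ^ (M + 1) * ρ z) := by
    apply iUnion_subset
    intro l
    apply ball_subset_ball'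
    have a1 := hs l.1 l.2
    have a2 := rho_lip h hρ l.1.1 z
    have a3 := (hρ l.1.1).1
    have a4 := (hρ z).1
    have a5 : (1 : ℝ) ≤ 2 ^ M := one_le_pow₀ (by norm_num)
    have a6 : e * ρ l.1.1 ≤ 1 / 2 * ρ l.1.1 := by gcongr
    rw [pow_succ]
    nlinarith
  calc ∑' _ : s, (1 : ℝ≥0∞) ≤ ∑' l : s, (C : ℝ≥0∞) ^ p * μ (B l) := ENNReal.tsum_le_tsum hB
    _ = (C : ℝ≥0∞) ^ p * ∑' l : s, μ (B l) := ENNReal.tsum_mul_left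
    _ ≤ (C : ℝ≥0∞) ^ p * μ (⋃ l, B l) := by
        gcongr
        exact tsum_meas_le_meas_iUnion_of_disjoint μ (fun _ => measurableSet_ball) hdisj
    _ ≤ (C : ℝ≥0∞) ^ p * μ (ball z (2 ^ (M + 1) * ρ z)) := by gcongr
    _ ≤ (C : ℝ≥0∞) ^ p * ((C : ℝ≥0∞) ^ (M + 1) * 1) := by
        gcongr
        rw [← (hρ z).2]
        exact dbl_iter h z _ _ (hρ z).1
    _ = _ := by ring

lemma shell_sum {Λ : Set ℂ} (d : ℂ → ℂ → ℝ) (K B : ℝ≥0)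
    (hN : ∀ (z : ℂ) (n : ℕ),
      ∑' _ : {l : Λ | d z l.1 < 2 ^ n / 2}, (1 : ℝ≥0∞) ≤ (K : ℝ≥0∞) * (B : ℝ≥0∞) ^ n)
    (m : ℕ) (hm : 2 * B ≤ 2 ^ m) :
    (⨆ z : ℂ, ∑' l : Λ, (1 + ENNReal.ofReal (d z l.1) ^ m)⁻¹) < ∞ := by
  have key : ∀ z : ℂ, ∑' l : Λ, (1 + ENNReal.ofReal (d z l.1) ^ m)⁻¹ ≤
      (4 : ℝ≥0∞) ^ m * K * 2 := by
    intro z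
    let A : ℕ → Set Λ := fun n => {l : Λ | d z l.1 < 2 ^ n / 2}
    let c : ℕ → ℝ≥0∞ := fun n => (4 : ℝ≥0∞) ^ m * ((2 : ℝ≥0∞) ^ (n * m))⁻¹
    have hpt : ∀ l : Λ, (1 + ENNReal.ofReal (d z l.1) ^ m)⁻¹ ≤
        ∑' n : ℕ, c n * (A n).indicator (fun _ => (1 : ℝ≥0∞)) l := by
      intro l
      have hex : ∃ n : ℕ, d z l.1 < 2 ^ n / 2 := by
        obtain ⟨n, hn⟩ := pow_unbounded_of_one_lt (d z l.1 * 2) (one_lt_two : (1:ℝ) < 2)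
        exact ⟨n, by linarith⟩
      obtain ⟨n, hn, hmin⟩ : ∃ n : ℕ, d z l.1 < 2 ^ n / 2 ∧
          ∀ k < n, ¬ d z l.1 < 2 ^ k / 2 :=
        ⟨Nat.find hex, Nat.find_spec hex, fun k hk => Nat.find_min hex hk⟩
      refine le_trans ?_ (ENNReal.le_tsum n)
      have hmem : l ∈ A n := hn
      rw [indicator_of_mem hmem, mul_one]
      rcases n with _ | n
      · calc (1 + ENNReal.ofReal (d z l.1) ^ m)⁻¹ ≤ 1 := by
              rw [ENNReal.inv_le_one]; exact le_self_add
          _ ≤ c 0 := by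
              simp only [c, zero_mul, pow_zero, inv_one, mul_one]
              exact one_le_pow₀ (by norm_num)
      · have h1 := not_lt.mp (hmin n (Nat.lt_succ_self n))
        have h2 : (2 : ℝ≥0∞) ^ (n + 1) ≤ 4 * ENNReal.ofReal (d z l.1) := by
          have : (2 : ℝ≥0∞) ^ (n + 1) = ENNReal.ofReal (2 ^ (n + 1)) := by
            rw [ENNReal.ofReal_pow (by norm_num)]; simp
          rw [this, show (4 : ℝ≥0∞) = ENNReal.ofReal 4 by simp,
            ← ENNReal.ofReal_mul (by norm_num)]
          apply ENNReal.ofReal_le_ofReal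
          rw [pow_succ]; linarith
        have h3 : (2 : ℝ≥0∞) ^ ((n + 1) * m) ≤ 4 ^ m * (1 + ENNReal.ofReal (d z l.1) ^ m) := by
          rw [pow_mul]
          calc ((2 : ℝ≥0∞) ^ (n + 1)) ^ m ≤ (4 * ENNReal.ofReal (d z l.1)) ^ m := by gcongr
            _ = 4 ^ m * ENNReal.ofReal (d z l.1) ^ m := mul_pow _ _ _
            _ ≤ _ := by gcongr; exact le_add_self
        have h4 : (4 : ℝ≥0∞) ^ m ≠ 0 := by simp
        have h5 : (4 : ℝ≥0∞) ^ m ≠ ∞ := ENNReal.pow_ne_top (by simp)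
        calc (1 + ENNReal.ofReal (d z l.1) ^ m)⁻¹
            = 4 ^ m * (4 ^ m * (1 + ENNReal.ofReal (d z l.1) ^ m))⁻¹ := by
              rw [ENNReal.mul_inv (Or.inl h4) (Or.inl h5), ← mul_assoc,
                ENNReal.mul_inv_cancel h4 h5, one_mul]
          _ ≤ c (n + 1) := by
              simp only [c]
              gcongr
    calc ∑' l : Λ, (1 + ENNReal.ofReal (d z l.1) ^ m)⁻¹
        ≤ ∑' l : Λ, ∑' n : ℕ, c n * (A n).indicator (fun _ => (1 : ℝ≥0∞)) l :=
          ENNReal.tsum_le_tsum hpt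
      _ = ∑' n : ℕ, ∑' l : Λ, c n * (A n).indicator (fun _ => (1 : ℝ≥0∞)) l :=
          ENNReal.tsum_comm
      _ = ∑' n : ℕ, c n * ∑' _ : A n, (1 : ℝ≥0∞) := by
          congr 1; ext n
          rw [ENNReal.tsum_mul_left, tsum_subtype (A n) (fun _ => (1 : ℝ≥0∞))]
      _ ≤ ∑' n : ℕ, (4 : ℝ≥0∞) ^ m * K * (2⁻¹ : ℝ≥0∞) ^ n := by
          apply ENNReal.tsum_le_tsum
          intro n
          have hr : ((2 : ℝ≥0∞) ^ (n * m))⁻¹ * (B : ℝ≥0∞) ^ n ≤ (2⁻¹ : ℝ≥0∞) ^ n := by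
            rw [mul_comm n m, pow_mul, ENNReal.inv_pow, ← mul_pow]
            gcongr
            have hB : (B : ℝ≥0∞) ≤ 2 ^ m * 2⁻¹ := by
              rw [← div_eq_mul_inv, ENNReal.le_div_iff_mul_le (by simp) (by simp), mul_comm]
              exact_mod_cast hm
            calc ((2 : ℝ≥0∞) ^ m)⁻¹ * B ≤ ((2 : ℝ≥0∞) ^ m)⁻¹ * (2 ^ m * 2⁻¹) := by gcongr
              _ = 2⁻¹ := by
                rw [← mul_assoc, ENNReal.inv_mul_cancel (by simp)
                  (ENNReal.pow_ne_top (by simp)), one_mul]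
          calc c n * ∑' _ : A n, (1 : ℝ≥0∞) ≤ c n * (K * (B : ℝ≥0∞) ^ n) := by
                gcongr; exact hN z n
            _ = (4 : ℝ≥0∞) ^ m * K * (((2 : ℝ≥0∞) ^ (n * m))⁻¹ * (B : ℝ≥0∞) ^ n) := by
                simp only [c]; ring
            _ ≤ _ := by gcongr
      _ = _ := by
          rw [ENNReal.tsum_mul_left, ENNReal.tsum_geometric, ENNReal.one_sub_inv_two, inv_inv]
  refine lt_of_le_of_lt (iSup_le key) ?_
  exact ENNReal.mul_lt_top (ENNReal.mul_lt_top (ENNReal.pow_lt_top (by simp))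
    ENNReal.coe_lt_top) (by simp)

lemma tail_bound {Λ : Set ℂ} (d : ℂ → ℂ → ℝ) (m : ℕ) (X : ℝ≥0∞)
    (hX : (⨆ z : ℂ, ∑' l : Λ, (1 + ENNReal.ofReal (d z l.1) ^ m)⁻¹) ≤ X) (r : ℝ) (hr : 1 ≤ r) :
    (⨆ z : ℂ, ∑' l : {w : ℂ // w ∈ Λ ∧ r ≤ d z w},
      (ENNReal.ofReal (d z l.1) ^ (m + 1))⁻¹) ≤ (ENNReal.ofReal r)⁻¹ * (2 * X) := by
  apply iSup_le
  intro z
  have hpt : ∀ l : {w : ℂ // w ∈ Λ ∧ r ≤ d z w}, (ENNReal.ofReal (d z l.1) ^ (m + 1))⁻¹ ≤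
      (ENNReal.ofReal r)⁻¹ * (2 * (1 + ENNReal.ofReal (d z l.1) ^ m)⁻¹) := by
    intro l
    have hd := l.2.2
    have h1 : (1 : ℝ≥0∞) ≤ ENNReal.ofReal (d z l.1) := by
      rw [ENNReal.one_le_ofReal]; linarith
    have hm1 : (1 : ℝ≥0∞) ≤ ENNReal.ofReal (d z l.1) ^ m := one_le_pow₀ h1
    have h0 : ENNReal.ofReal (d z l.1) ≠ 0 := (lt_of_lt_of_le one_pos h1).ne'
    have ht : ENNReal.ofReal (d z l.1) ≠ ∞ := ENNReal.ofReal_ne_top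
    rw [pow_succ', ENNReal.mul_inv (Or.inl h0) (Or.inl ht)]
    gcongr
    rw [← ENNReal.inv_le_inv, inv_inv, ENNReal.mul_inv (by simp) (by simp), inv_inv]
    calc (2⁻¹ : ℝ≥0∞) * (1 + ENNReal.ofReal (d z l.1) ^ m)
        ≤ 2⁻¹ * (ENNReal.ofReal (d z l.1) ^ m + ENNReal.ofReal (d z l.1) ^ m) := by gcongr
      _ = _ := by
        rw [← two_mul, ← mul_assoc, ENNReal.inv_mul_cancel (by simp) (by simp), one_mul]
  refine (ENNReal.tsum_le_tsum hpt).trans ?_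
  rw [ENNReal.tsum_mul_left, ENNReal.tsum_mul_left]
  gcongr
  refine le_trans ?_ ((le_iSup (fun z : ℂ =>
    ∑' l : Λ, (1 + ENNReal.ofReal (d z l.1) ^ m)⁻¹) z).trans hX)
  exact ENNReal.tsum_comp_le_tsum_of_injective
    (f := fun l : {w : ℂ // w ∈ Λ ∧ r ≤ d z w} => (⟨l.1, l.2.1⟩ : Λ))
    (fun a b hab => Subtype.ext (congrArg (fun x : Λ => x.1) hab))
    (fun l : Λ => (1 + ENNReal.ofReal (d z l.1) ^ m)⁻¹)

/-- For a `ρ`-separated sequence `Λ` there is `m ∈ ℕ` with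
`sup_z Σ_{λ∈Λ} (1 + d_φ(z,λ)^m)⁻¹ < ∞`, and moreover the tails
`sup_z Σ_{d_φ(z,λ) ≥ r} d_φ(z,λ)^{-m}` tend to `0` as `r → ∞`. -/
theorem separated_sums
    (φ : ℂ → ℝ) (μ : Measure ℂ) (hφ : HasDoublingLaplacian φ μ)
    (ρ : ℂ → ℝ) (hρ : IsRadius μ ρ)
    (Λ : Set ℂ) (hΛ : RhoSeparated ρ Λ) :
    ∃ m : ℕ,
      (⨆ z : ℂ, ∑' l : Λ, (1 + ENNReal.ofReal (pathDist ρ z l.1) ^ m)⁻¹) < ∞ ∧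
      Tendsto
        (fun r : ℝ => ⨆ z : ℂ,
          ∑' l : {w : ℂ // w ∈ Λ ∧ r ≤ pathDist ρ z w},
            (ENNReal.ofReal (pathDist ρ z l.1) ^ m)⁻¹)
        atTop (𝓝 0) := by
  obtain ⟨C₀, -, hC₀⟩ := hφ.doubling
  obtain ⟨C, hC, hd⟩ : ∃ C : ℝ≥0, 1 ≤ C ∧ IsDoubling μ C := by
    refine ⟨max C₀ 1, le_max_right _ _, fun z r hr => (hC₀ z r hr).trans ?_⟩
    gcongr
    exact le_max_left _ _
  obtain ⟨a, ha⟩ := exists_growth hC hd hρ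
  obtain ⟨q, hq⟩ := count_bound hd hρ hΛ
  have hN : ∀ (z : ℂ) (n : ℕ),
      ∑' _ : {l : Λ | pathDist ρ z l.1 < 2 ^ n / 2}, (1 : ℝ≥0∞) ≤
        ((C ^ q : ℝ≥0) : ℝ≥0∞) * ((C ^ a : ℝ≥0) : ℝ≥0∞) ^ n := by
    intro z n
    have := hq z (a * n) {l : Λ | pathDist ρ z l.1 < 2 ^ n / 2} ?_
    · rw [pow_mul] at this
      exact_mod_cast this
    · intro l hl
      by_contra! hlt
      have hz := (hρ z).1
      have hS : 0 < 2 ^ (a * n) * ρ z := by positivity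
      have hle := length_lower (rho_cont hd hρ) (fun z => (hρ z).1) z l.1
        (2 ^ (a * n) * ρ z) (2 * (2 ^ (a * n) * ρ z) / 2 ^ n) hS (by positivity)
        (ha z n) hlt.le
      have e : 2 ^ (a * n) * ρ z / (2 * (2 ^ (a * n) * ρ z) / 2 ^ n) = 2 ^ n / 2 := by
        field_simp
      rw [e] at hle
      exact absurd hl (not_lt.mpr hle)
  obtain ⟨m, hm⟩ := pow_unbounded_of_one_lt (2 * C ^ a) (one_lt_two : (1 : ℝ≥0) < 2)
  have hfin := shell_sum (pathDist ρ) (C ^ q) (C ^ a) hN m hm.le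
  refine ⟨m + 1, shell_sum (pathDist ρ) (C ^ q) (C ^ a) hN (m + 1) (hm.le.trans ?_), ?_⟩
  · exact pow_le_pow_right₀ one_le_two (Nat.le_succ m)
  · set X := ⨆ z : ℂ, ∑' l : Λ, (1 + ENNReal.ofReal (pathDist ρ z l.1) ^ m)⁻¹ with hX
    have hlim : Tendsto (fun r : ℝ => (ENNReal.ofReal r)⁻¹ * (2 * X)) atTop (𝓝 0) := by
      have h1 : Tendsto (fun r : ℝ => (ENNReal.ofReal r)⁻¹) atTop (𝓝 0) := by
        rw [← ENNReal.inv_top]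
        exact ENNReal.tendsto_ofReal_atTop.inv
      have := ENNReal.Tendsto.mul_const (b := 2 * X) h1
        (Or.inr (ENNReal.mul_ne_top (by simp) hfin.ne))
      simpa using this
    refine tendsto_of_tendsto_of_tendsto_of_le_of_le' tendsto_const_nhds hlim
      (Eventually.of_forall fun _ => zero_le) ?_
    filter_upwards [eventually_ge_atTop 1] with r hr
    exact tail_bound (pathDist ρ) m X le_rfl r hr

end
end

section
/- Let μ be a doubling measure on ℂ. For z ∈ ℂ define the measure ν_z on ℝ⁺ by ν_z(A) = μ({ζ = z + re^{iθ} : r ∈ A}) for Borel A ⊂ ℝ⁺ (the radial projection of μ centred at z). Then ν_z is a doubling measure on ℝ⁺, and there is a constant K, independent of z, such that the doubling constant of ν_z is at most K times the doubling constant of μ. -/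
open MeasureTheory Metric Filter Set
open scoped ENNReal NNReal Real Topology Classical

noncomputable section

/-- The radial projection `ν_z` of a doubling measure `μ` centred at `z` is doubling on
`ℝ⁺`, with doubling constant at most `K · C_μ` for a `K` independent of `z`. -/
theorem radial_projection_doubling
    (μ : Measure ℂ) (Cd : ℝ≥0) (hCd : 0 < Cd) (hd : IsDoubling μ Cd) :
    ∃ K : ℝ≥0, 0 < K ∧ ∀ z : ℂ, ∀ x r : ℝ, 0 ≤ x → 0 < r →
      Measure.map (fun ζ : ℂ => ‖ζ - z‖) μ
          (Ioo (x - 2 * r) (x + 2 * r) ∩ Ici 0) ≤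
        (K * Cd : ℝ≥0) *
          Measure.map (fun ζ : ℂ => ‖ζ - z‖) μ
            (Ioo (x - r) (x + r) ∩ Ici 0) := by
  refine ⟨Cd ^ 3, by positivity, fun z x r hx hr => ?_⟩
  have hf : Measurable (fun ζ : ℂ => ‖ζ - z‖) := by fun_prop
  have hm : ∀ a b : ℝ, MeasurableSet (Ioo a b ∩ Ici (0:ℝ)) :=
    fun a b => measurableSet_Ioo.inter measurableSet_Ici
  rw [Measure.map_apply hf (hm _ _), Measure.map_apply hf (hm _ _)]
  obtain ⟨u, hu, hdisj, hcov⟩ := Vitali.exists_disjoint_subfamily_covering_enlargement_closedBall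
    (sphere z x) (fun p : ℂ => p) (fun _ => r / 4) (r / 4) (fun _ _ => le_rfl) 5 (by norm_num)
  have hcount : u.Countable := by
    refine hdisj.countable_of_nonempty_interior fun p _ => ?_
    exact ⟨p, ball_subset_interior_closedBall (mem_ball_self (by positivity))⟩
  have hd4 : ∀ p : ℂ, μ (ball p (4 * r)) ≤ (Cd : ℝ≥0∞) ^ 4 * μ (closedBall p (r / 4)) := by
    intro p
    have h1 := hd p (r / 4) (by positivity)
    have h2 := hd p (2 * (r / 4)) (by positivity)
    have h3 := hd p (2 * (2 * (r / 4))) (by positivity)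
    have h4 := hd p (2 * (2 * (2 * (r / 4)))) (by positivity)
    have e : 4 * r = 2 * (2 * (2 * (2 * (r / 4)))) := by ring
    rw [e]
    calc _ ≤ (Cd : ℝ≥0∞) * (Cd * (Cd * (Cd * μ (ball p (r / 4))))) := by
            refine h4.trans ?_
            gcongr
            refine h3.trans ?_
            gcongr
            refine h2.trans ?_
            gcongr
      _ = (Cd : ℝ≥0∞) ^ 4 * μ (ball p (r / 4)) := by ring
      _ ≤ _ := by
            gcongr
            exact ball_subset_closedBall
  have hA : (fun ζ : ℂ => ‖ζ - z‖) ⁻¹' (Ioo (x - 2 * r) (x + 2 * r) ∩ Ici 0) ⊆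
      ⋃ p ∈ u, ball p (4 * r) := by
    intro ζ hζ
    obtain ⟨⟨h1, h2⟩, -⟩ := hζ
    set e : ℂ := Complex.exp (Complex.arg (ζ - z) * Complex.I) with he
    have hne : ‖e‖ = 1 := Complex.norm_exp_ofReal_mul_I _
    have hw : (‖ζ - z‖ : ℂ) * e = ζ - z := Complex.norm_mul_exp_arg_mul_I _
    have hp : z + x * e ∈ sphere z x := by
      simp [hne, abs_of_nonneg hx]
    obtain ⟨b, hb, hsub⟩ := hcov _ hp
    have hpb : z + x * e ∈ closedBall b (5 * (r / 4)) :=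
      hsub (mem_closedBall_self (by positivity))
    rw [mem_closedBall] at hpb
    have hdist : dist ζ (z + x * e) < 2 * r := by
      have : ζ - (z + x * e) = ((‖ζ - z‖ - x : ℝ) : ℂ) * e := by
        push_cast
        linear_combination -hw
      rw [dist_eq_norm, this, norm_mul, hne, mul_one, Complex.norm_real, Real.norm_eq_abs, abs_lt]
      constructor <;> linarith
    refine mem_iUnion₂.2 ⟨b, hb, ?_⟩
    rw [mem_ball]
    linarith [dist_triangle ζ (z + x * e) b]
  have hB : (⋃ p ∈ u, closedBall p (r / 4)) ⊆
      (fun ζ : ℂ => ‖ζ - z‖) ⁻¹' (Ioo (x - r) (x + r) ∩ Ici 0) := by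
    intro ζ hζ
    obtain ⟨p, hp, hζp⟩ := mem_iUnion₂.1 hζ
    have hpx : dist p z = x := hu hp
    rw [mem_closedBall] at hζp
    have t1 := dist_triangle ζ p z
    have t2 := dist_triangle p ζ z
    rw [dist_comm p ζ] at t2
    rw [dist_eq_norm ζ z] at t1 t2
    exact ⟨⟨by linarith, by linarith⟩, norm_nonneg _⟩
  calc _ ≤ μ (⋃ p ∈ u, ball p (4 * r)) := measure_mono hA
    _ ≤ ∑' p : u, μ (ball (p : ℂ) (4 * r)) := measure_biUnion_le μ hcount _
    _ ≤ ∑' p : u, (Cd : ℝ≥0∞) ^ 4 * μ (closedBall (p : ℂ) (r / 4)) :=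
        ENNReal.tsum_le_tsum fun p => hd4 p
    _ = (Cd : ℝ≥0∞) ^ 4 * ∑' p : u, μ (closedBall (p : ℂ) (r / 4)) := ENNReal.tsum_mul_left
    _ = (Cd : ℝ≥0∞) ^ 4 * μ (⋃ p ∈ u, closedBall p (r / 4)) := by
        rw [measure_biUnion hcount hdisj fun p _ => measurableSet_closedBall]
    _ ≤ (Cd : ℝ≥0∞) ^ 4 *
          μ ((fun ζ : ℂ => ‖ζ - z‖) ⁻¹' (Ioo (x - r) (x + r) ∩ Ici 0)) :=
        mul_le_mul_right (measure_mono hB) _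
    _ = _ := by
        push_cast
        ring

end
end

section
/- Let μ be a doubling measure on ℂ, not identically zero, ρ the associated radius function, and D^r(z) = D(z, rρ(z)). Let ε(r) be a positive function with ε(r)/r → 0 as r → ∞. Then μ(D^{r+ε(r)}(z))/μ(D^r(z)) → 1 and μ(D^{r−ε(r)}(z))/μ(D^r(z)) → 1 as r → ∞, uniformly in z ∈ ℂ. -/
open MeasureTheory Metric Filter Set
open scoped ENNReal NNReal Real Topology Classical

noncomputable section

lemma ann_pow (μ : Measure ℂ) (C : ℝ≥0) (hd : IsDoubling μ C) (z : ℂ) (s : ℝ) (hs : 0 < s) (n : ℕ) :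
    μ (ball z (2 ^ n * s)) ≤ ((C ^ n : ℝ≥0) : ℝ≥0∞) * μ (ball z s) := by
  induction n with
  | zero => simp
  | succ n ih =>
    have h := hd z (2 ^ n * s) (by positivity)
    have e : (2:ℝ) ^ (n+1) * s = 2 * (2 ^ n * s) := by ring
    rw [e]
    refine h.trans ?_
    calc (C : ℝ≥0∞) * μ (ball z (2 ^ n * s)) ≤ C * (((C ^ n : ℝ≥0) : ℝ≥0∞) * μ (ball z s)) := by gcongr
      _ = _ := by rw [← mul_assoc]; congr 1; push_cast; ring

lemma ann_step (μ : Measure ℂ) (C : ℝ≥0) (hd : IsDoubling μ C) (z : ℂ) (R s : ℝ) (hs : 0 < s)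
    (hR : 4 * s ≤ R) :
    μ (ball z R \ ball z (R - s)) ≤
      ((C ^ 5 : ℝ≥0) : ℝ≥0∞) * μ (ball z (R - s) \ ball z (R - 4 * s)) := by
  set A := ball z R \ ball z (R - s) with hA
  have key : ∀ x : ℂ, ∃ y : ℂ, x ∈ A →
      dist y x = 2 * s ∧ dist y z = dist x z - 2 * s := by
    intro x
    by_cases hx : x ∈ A
    swap
    · exact ⟨0, fun h => absurd h hx⟩
    have h1 : R - s ≤ dist x z := by simpa using hx.2
    have hpos : 0 < ‖x - z‖ := by rw [← dist_eq_norm]; linarith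
    refine ⟨x - ((2 * s / ‖x - z‖ : ℝ)) • (x - z), fun _ => ⟨?_, ?_⟩⟩
    · rw [dist_eq_norm]
      have : x - ((2 * s / ‖x - z‖ : ℝ)) • (x - z) - x = -(((2 * s / ‖x - z‖ : ℝ)) • (x - z)) := by abel
      rw [this, norm_neg, norm_smul, Real.norm_of_nonneg (by positivity)]
      field_simp
    · rw [dist_eq_norm, dist_eq_norm]
      have : x - ((2 * s / ‖x - z‖ : ℝ)) • (x - z) - z = ((1 - 2 * s / ‖x - z‖ : ℝ)) • (x - z) := by
        rw [sub_smul, one_smul]; abel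
      rw [dist_eq_norm] at h1
      have h2 : 0 ≤ 1 - 2 * s / ‖x - z‖ := by
        rw [sub_nonneg, div_le_one hpos]; linarith
      rw [this, norm_smul, Real.norm_of_nonneg h2]
      field_simp
  choose f hf using key
  obtain ⟨u, huA, hdis, hcov⟩ := Vitali.exists_disjoint_subfamily_covering_enlargement_closedBall
    A (fun x : ℂ => x) (fun _ => 3 * s) (3 * s) (fun _ _ => le_rfl) 5 (by norm_num)
  have hsub : ∀ x ∈ u, ball (f x) s ⊆ closedBall x (3 * s) := by
    intro x hx w hw
    have h1 := (hf x (huA hx)).1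
    have h2 := dist_triangle w (f x) x
    rw [mem_ball] at hw
    rw [mem_closedBall]; linarith
  have hdis' : u.PairwiseDisjoint (fun x => ball (f x) s) := by
    intro a ha b hb hab
    exact (hdis ha hb hab).mono (hsub a ha) (hsub b hb)
  have hcount : u.Countable := hdis'.countable_of_isOpen (fun _ _ => isOpen_ball)
    (fun x _ => ⟨f x, mem_ball_self hs⟩)
  have hAcov : A ⊆ ⋃ x ∈ u, ball (f x) (2 ^ 5 * s) := by
    intro x hx
    obtain ⟨b, hb, hbs⟩ := hcov x hx
    have h1 : x ∈ closedBall b (5 * (3 * s)) := hbs (mem_closedBall_self (by positivity))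
    have h2 := (hf b (huA hb)).1
    have h3 := dist_triangle x b (f b)
    rw [mem_closedBall] at h1
    rw [dist_comm] at h2
    simp only [mem_iUnion, mem_ball]
    exact ⟨b, hb, by linarith⟩
  have hin : (⋃ x ∈ u, ball (f x) s) ⊆ ball z (R - s) \ ball z (R - 4 * s) := by
    intro w hw
    simp only [mem_iUnion, mem_ball] at hw
    obtain ⟨x, hx, hw⟩ := hw
    have h1 := (hf x (huA hx)).2
    have h2 : dist x z < R := by simpa using (huA hx).1
    have h3 : R - s ≤ dist x z := by simpa using (huA hx).2
    have h4 := dist_triangle w (f x) z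
    have h5 := dist_triangle (f x) w z
    rw [dist_comm (f x) w] at h5
    refine ⟨by rw [mem_ball]; linarith, ?_⟩
    rw [mem_ball, not_lt]; linarith
  calc μ A ≤ μ (⋃ x ∈ u, ball (f x) (2 ^ 5 * s)) := measure_mono hAcov
    _ ≤ ∑' x : u, μ (ball (f x) (2 ^ 5 * s)) := measure_biUnion_le μ hcount _
    _ ≤ ∑' x : u, ((C ^ 5 : ℝ≥0) : ℝ≥0∞) * μ (ball (f x) s) :=
        ENNReal.tsum_le_tsum fun x => ann_pow μ C hd _ s hs 5
    _ = ((C ^ 5 : ℝ≥0) : ℝ≥0∞) * ∑' x : u, μ (ball (f x) s) := ENNReal.tsum_mul_left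
    _ = ((C ^ 5 : ℝ≥0) : ℝ≥0∞) * μ (⋃ x ∈ u, ball (f x) s) := by
        rw [measure_biUnion hcount hdis' (fun _ _ => measurableSet_ball)]
    _ ≤ _ := by gcongr

lemma ann_contr (μ : Measure ℂ) (C : ℝ≥0) (hd : IsDoubling μ C) (z : ℂ) (R s : ℝ) (hs : 0 < s)
    (hR : 4 * s ≤ R) :
    μ (ball z R \ ball z (R - s)) ≤
      ((C ^ 5 / (1 + C ^ 5) : ℝ≥0) : ℝ≥0∞) * μ (ball z R \ ball z (R - 4 * s)) := by
  have h := ann_step μ C hd z R s hs hR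
  set K : ℝ≥0 := C ^ 5
  have hsplit : μ (ball z R \ ball z (R - 4 * s)) =
      μ (ball z R \ ball z (R - s)) + μ (ball z (R - s) \ ball z (R - 4 * s)) := by
    rw [← measure_union _ (measurableSet_ball.diff measurableSet_ball)]
    · congr 1
      ext w
      simp only [Set.mem_sdiff, mem_ball, mem_union, not_lt]
      constructor
      · rintro ⟨h1, h2⟩
        rcases lt_or_ge (dist w z) (R - s) with h3 | h3
        · exact Or.inr ⟨h3, h2⟩
        · exact Or.inl ⟨h1, h3⟩
      · rintro (⟨h1, h2⟩ | ⟨h1, h2⟩)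
        · exact ⟨h1, by linarith⟩
        · exact ⟨by linarith, h2⟩
    · rw [Set.disjoint_left]
      rintro w ⟨_, h1⟩ ⟨h2, _⟩
      exact h1 h2
  have h2 : ((1 + K : ℝ≥0) : ℝ≥0∞) * μ (ball z R \ ball z (R - s)) ≤
      (K : ℝ≥0∞) * μ (ball z R \ ball z (R - 4 * s)) := by
    rw [hsplit]
    push_cast
    rw [add_mul, one_mul, mul_add, add_comm]
    gcongr
  have hne : (1 + K : ℝ≥0) ≠ 0 := by positivity
  have e : ((K / (1 + K) : ℝ≥0) : ℝ≥0∞) = (((1 + K)⁻¹ : ℝ≥0) : ℝ≥0∞) * (K : ℝ≥0∞) := by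
    rw [← ENNReal.coe_mul]; congr 1; rw [div_eq_mul_inv, mul_comm]
  have e1 : (((1 + K)⁻¹ : ℝ≥0) : ℝ≥0∞) * ((1 + K : ℝ≥0) : ℝ≥0∞) = 1 := by
    rw [← ENNReal.coe_mul, inv_mul_cancel₀ hne, ENNReal.coe_one]
  calc μ (ball z R \ ball z (R - s))
      = (((1 + K)⁻¹ : ℝ≥0) : ℝ≥0∞) * (((1 + K : ℝ≥0) : ℝ≥0∞) * μ (ball z R \ ball z (R - s))) := by
        rw [← mul_assoc, e1, one_mul]
    _ ≤ (((1 + K)⁻¹ : ℝ≥0) : ℝ≥0∞) * ((K : ℝ≥0∞) * μ (ball z R \ ball z (R - 4 * s))) := by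
        gcongr
    _ = _ := by rw [e, mul_assoc]

lemma ann_iter (μ : Measure ℂ) (C : ℝ≥0) (hd : IsDoubling μ C) (z : ℂ) (R : ℝ) (hR : 0 < R) (k : ℕ) :
    μ (ball z R \ ball z (R - R / 4 ^ k)) ≤
      (((C ^ 5 / (1 + C ^ 5)) ^ k : ℝ≥0) : ℝ≥0∞) * μ (ball z R) := by
  induction k with
  | zero =>
    rw [pow_zero (C ^ 5 / (1 + C ^ 5)), ENNReal.coe_one, one_mul]
    exact measure_mono diff_subset
  | succ k ih =>
    have e : 4 * (R / 4 ^ (k+1)) = R / 4 ^ k := by rw [pow_succ]; field_simp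
    have h1 : R / 4 ^ k ≤ R := div_le_self hR.le (one_le_pow₀ (by norm_num))
    have h := ann_contr μ C hd z R (R / 4 ^ (k+1)) (by positivity) (by rw [e]; exact h1)
    rw [e] at h
    refine h.trans ?_
    rw [pow_succ' (C ^ 5 / (1 + C ^ 5)), ENNReal.coe_mul, mul_assoc]
    gcongr

lemma ann_core (μ : Measure ℂ) (C : ℝ≥0) (hd : IsDoubling μ C)
    (hfin : ∀ z R, μ (ball z R) ≠ ∞) (η : ℝ) (hη : 0 < η) :
    ∃ δ : ℝ, 0 < δ ∧ ∀ (z : ℂ) (R : ℝ), 0 < R → ∀ R' : ℝ, R - R * δ ≤ R' →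
      ENNReal.ofReal (1 - η) * μ (ball z R) ≤ μ (ball z R') := by
  have hc : (C ^ 5 / (1 + C ^ 5) : ℝ≥0) < 1 := by
    rw [div_lt_one (by positivity)]
    exact lt_add_of_pos_left _ one_pos
  obtain ⟨k, hk⟩ := exists_pow_lt_of_lt_one (Real.toNNReal_pos.2 hη) hc
  refine ⟨1 / 4 ^ k, by positivity, fun z R hR R' hR' => ?_⟩
  have h := ann_iter μ C hd z R hR k
  have hsub : ball z (R - R / 4 ^ k) ⊆ ball z R' := ball_subset_ball (by
    have : R / 4 ^ k = R * (1 / 4 ^ k) := by ring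
    rw [this]; exact hR')
  have h1 : μ (ball z R) ≤ μ (ball z R') + ENNReal.ofReal η * μ (ball z R) := by
    calc μ (ball z R) ≤ μ (ball z (R - R / 4 ^ k) ∪ (ball z R \ ball z (R - R / 4 ^ k))) :=
          measure_mono (by rw [union_sdiff_self]; exact subset_union_right)
      _ ≤ μ (ball z (R - R / 4 ^ k)) + μ (ball z R \ ball z (R - R / 4 ^ k)) := measure_union_le _ _
      _ ≤ μ (ball z R') + ENNReal.ofReal η * μ (ball z R) := by
        refine add_le_add (measure_mono hsub) (h.trans ?_)
        gcongr
        exact ENNReal.coe_le_coe.2 hk.le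
  rw [ENNReal.ofReal_sub _ hη.le, ENNReal.ofReal_one, ENNReal.sub_mul (fun _ _ => hfin z R), one_mul]
  exact tsub_le_iff_right.2 h1

/-- The mass of a disk `D^r(z)` is not concentrated near its boundary: if
`ε(r)/r → 0` then `μ(D^{r±ε(r)}(z))/μ(D^r(z)) → 1` uniformly in `z`. -/
theorem annulus_mass_ratio
    (μ : Measure ℂ) (Cd : ℝ≥0) (hCd : 0 < Cd) (hd : IsDoubling μ Cd) (hne : μ ≠ 0)
    (ρ : ℂ → ℝ) (hρ : IsRadius μ ρ)
    (ε : ℝ → ℝ) (hε : ∀ r, 0 < ε r)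
    (hlim : Tendsto (fun r => ε r / r) atTop (𝓝 0)) :
    ∀ η : ℝ, 0 < η → ∃ R : ℝ, ∀ r : ℝ, R ≤ r → ∀ z : ℂ,
      μ (ball z ((r + ε r) * ρ z)) ≤
        ENNReal.ofReal (1 + η) * μ (ball z (r * ρ z)) ∧
      ENNReal.ofReal (1 - η) * μ (ball z (r * ρ z)) ≤
        μ (ball z ((r - ε r) * ρ z)) := by
  have hfin : ∀ z R, μ (ball z R) ≠ ∞ := by
    intro z R
    obtain ⟨hp, h1⟩ := hρ z
    obtain ⟨n, hn⟩ := pow_unbounded_of_one_lt (R / ρ z) (one_lt_two)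
    have h2 : R ≤ 2 ^ n * ρ z := by rw [div_lt_iff₀ hp] at hn; exact hn.le
    have h3 := ann_pow μ Cd hd z (ρ z) hp n
    rw [h1, mul_one] at h3
    exact ((measure_mono (ball_subset_ball h2)).trans_lt
      (h3.trans_lt ENNReal.coe_lt_top)).ne
  intro η hη
  obtain ⟨δ₁, hδ₁, H₁⟩ := ann_core μ Cd hd hfin η hη
  obtain ⟨δ₂, hδ₂, H₂⟩ := ann_core μ Cd hd hfin (η / (1 + η)) (by positivity)
  have hev := hlim.eventually (gt_mem_nhds (lt_min hδ₁ hδ₂))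
  obtain ⟨R, hR⟩ := eventually_atTop.1 (hev.and (eventually_gt_atTop 0))
  refine ⟨R, fun r hr z => ?_⟩
  obtain ⟨h1, hr0⟩ := hR r hr
  have hp := (hρ z).1
  have he := hε r
  rw [div_lt_iff₀ hr0] at h1
  have a1 : ε r ≤ r * δ₁ := by
    have := mul_le_mul_of_nonneg_right (min_le_left δ₁ δ₂) hr0.le
    linarith
  have a2 : ε r ≤ r * δ₂ := by
    have := mul_le_mul_of_nonneg_right (min_le_right δ₁ δ₂) hr0.le
    linarith
  constructor
  · have h := H₂ z ((r + ε r) * ρ z) (by positivity) (r * ρ z) (by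
      have b1 := mul_le_mul_of_nonneg_right a2 hp.le
      have b2 : 0 ≤ ε r * ρ z * δ₂ := by positivity
      nlinarith)
    have e : ENNReal.ofReal (1 + η) * ENNReal.ofReal (1 - η / (1 + η)) = 1 := by
      rw [← ENNReal.ofReal_mul (by positivity), ← ENNReal.ofReal_one]
      congr 1
      field_simp
      ring
    calc μ (ball z ((r + ε r) * ρ z))
        = ENNReal.ofReal (1 + η) * (ENNReal.ofReal (1 - η / (1 + η)) *
            μ (ball z ((r + ε r) * ρ z))) := by rw [← mul_assoc, e, one_mul]
      _ ≤ _ := by gcongr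
  · refine H₁ z (r * ρ z) (by positivity) _ ?_
    have b1 := mul_le_mul_of_nonneg_right a1 hp.le
    nlinarith

end
end
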